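/- For every s ∈ [1, ∞) there is a constant C(s) such that for all k, λ ∈ ℕ with λ ≥ 1, every smooth f : ℝ² → ℝ with supp f ⊂ [−k,k]², and every smooth ℤ²-periodic g : ℝ² → ℝ, one has ‖f · g(λ·)‖_{L^s(ℝ²)} ≤ ‖f‖_{L^s(ℝ²)} ‖g‖_{L^s([0,1]²)} + C(s) (2k)^{2/s} λ^{−1/s} ‖f‖_{C¹(ℝ²)} ‖g‖_{L^s([0,1]²)}. -/

import Mathlib

open MeasureTheory

lemma ih_box_ae (a b : ℝ) :
    (Set.Icc ((a, a) : ℝ × ℝ) (b, b)) =ᵐ[volume] (Set.Ico a b ×ˢ Set.Ico a b : Set (ℝ × ℝ)) := by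
  have h : Set.Icc ((a, a) : ℝ × ℝ) (b, b) = Set.Icc a b ×ˢ Set.Icc a b := by
    rw [Set.Icc_prod_Icc]
  rw [h, Measure.volume_eq_prod]
  exact Measure.set_prod_ae_eq Ico_ae_eq_Icc.symm Ico_ae_eq_Icc.symm

lemma ih_fold (K : ℕ) (Φ : ℝ × ℝ → ℝ) (hΦ : Integrable Φ)
    (h0 : ∀ x, x ∉ Set.Icc ((-(K:ℝ), -(K:ℝ)) : ℝ × ℝ) ((K:ℝ), (K:ℝ)) → Φ x = 0) :
    ∫ x, Φ x = ∫ x in (Set.Icc ((0, 0) : ℝ × ℝ) (1, 1)),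
      ∑ m ∈ Finset.Ico (-(K:ℤ)) K ×ˢ Finset.Ico (-(K:ℤ)) K,
        Φ (x.1 + (m.1 : ℝ), x.2 + (m.2 : ℝ)) := by
  rw [setIntegral_congr_set (ih_box_ae 0 1)]
  rw [← setIntegral_eq_integral_of_forall_compl_eq_zero h0, setIntegral_congr_set (ih_box_ae _ _)]
  set B : ℤ × ℤ → Set (ℝ × ℝ) := fun m =>
    Set.Ico (m.1 : ℝ) (m.1 + 1) ×ˢ Set.Ico (m.2 : ℝ) (m.2 + 1) with hB
  have hmem : ∀ (m : ℤ × ℤ) (x : ℝ × ℝ), x ∈ B m ↔ ⌊x.1⌋ = m.1 ∧ ⌊x.2⌋ = m.2 := by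
    intro m x
    simp only [hB, Set.mem_prod, Set.mem_Ico, Int.floor_eq_iff]
  have hU : (Set.Ico (-(K:ℝ)) K ×ˢ Set.Ico (-(K:ℝ)) K : Set (ℝ × ℝ)) =
      ⋃ m ∈ Finset.Ico (-(K:ℤ)) K ×ˢ Finset.Ico (-(K:ℤ)) K, B m := by
    ext x
    have key : ∀ t : ℝ, t ∈ Set.Ico (-(K:ℝ)) K ↔ ⌊t⌋ ∈ Finset.Ico (-(K:ℤ)) K := by
      intro t
      rw [Finset.mem_Ico, Int.le_floor, Int.floor_lt, Set.mem_Ico]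
      push_cast
      rfl
    simp only [Set.mem_iUnion, hmem, Set.mem_prod, key, Finset.mem_product]
    constructor
    · rintro ⟨h1, h2⟩
      exact ⟨(⌊x.1⌋, ⌊x.2⌋), ⟨h1, h2⟩, rfl, rfl⟩
    · rintro ⟨m, ⟨h1, h2⟩, h3, h4⟩
      rw [h3, h4]; exact ⟨h1, h2⟩
  rw [hU, integral_biUnion_finset]
  · rw [integral_finset_sum]
    · refine Finset.sum_congr rfl fun m _ => ?_
      have hp := measurePreserving_add_right (volume : Measure (ℝ × ℝ)) ((m.1 : ℝ), (m.2 : ℝ))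
      have := hp.setIntegral_preimage_emb (measurableEmbedding_addRight _) Φ (B m)
      rw [← this]
      have hpre : (fun x : ℝ × ℝ => x + ((m.1 : ℝ), (m.2 : ℝ))) ⁻¹' B m =
          Set.Ico (0:ℝ) 1 ×ˢ Set.Ico (0:ℝ) 1 := by
        ext x
        simp only [hB, Set.mem_preimage, Set.mem_prod, Set.mem_Ico, Prod.fst_add, Prod.snd_add]
        constructor
        · rintro ⟨⟨_, _⟩, _, _⟩
          refine ⟨⟨?_, ?_⟩, ?_, ?_⟩ <;> linarith
        · rintro ⟨⟨_, _⟩, _, _⟩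
          refine ⟨⟨?_, ?_⟩, ?_, ?_⟩ <;> linarith
      rw [hpre]
      rfl
    · intro m _
      exact (hΦ.comp_add_right ((m.1 : ℝ), (m.2 : ℝ))).integrableOn
  · intro m _
    exact measurableSet_Ico.prod measurableSet_Ico
  · intro m _ n _ hmn
    refine Set.disjoint_left.2 fun x hx hy => hmn ?_
    rw [hmem] at hx hy
    exact Prod.ext (hx.1.symm.trans hy.1) (hx.2.symm.trans hy.2)
  · intro m _
    exact hΦ.integrableOn

lemma ih_unit (s : ℝ) (hs : 1 ≤ s) (K : ℕ) (h g : ℝ × ℝ → ℝ) (hc : Continuous h)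
    (gc : Continuous g) (D : ℝ) (hD0 : 0 ≤ D)
    (h0 : ∀ x, x ∉ Set.Icc ((-(K:ℝ), -(K:ℝ)) : ℝ × ℝ) ((K:ℝ), (K:ℝ)) → h x = 0)
    (hD : ∀ x y : ℝ × ℝ, ‖x - y‖ ≤ 1 → |h x - h y| ≤ D)
    (hg : ∀ (m₁ m₂ : ℤ) (x : ℝ × ℝ), g (x.1 + m₁, x.2 + m₂) = g x) :
    ∫ x, |h x * g x| ^ s ≤
      ((∫ x, |h x| ^ s) ^ (1/s) + (2 * (K:ℝ)) ^ (2/s) * D) ^ s *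
        ∫ x in Set.Icc (((0:ℝ), (0:ℝ)) : ℝ × ℝ) ((1:ℝ), (1:ℝ)), |g x| ^ s := by
  have hs0 : 0 < s := by linarith
  have hcs : HasCompactSupport h := HasCompactSupport.intro isCompact_Icc h0
  have c1 : Continuous fun x => |h x| ^ s := hc.abs.rpow_const fun _ => Or.inr hs0.le
  have c2 : Continuous fun x => |h x * g x| ^ s :=
    (hc.mul gc).abs.rpow_const fun _ => Or.inr hs0.le
  have cg : Continuous fun x => |g x| ^ s := gc.abs.rpow_const fun _ => Or.inr hs0.le
  have z1 : ∀ x, x ∉ Set.Icc ((-(K:ℝ), -(K:ℝ)) : ℝ × ℝ) ((K:ℝ), (K:ℝ)) → |h x| ^ s = 0 := by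
    intro x hx; rw [h0 x hx, abs_zero, Real.zero_rpow hs0.ne']
  have z2 : ∀ x, x ∉ Set.Icc ((-(K:ℝ), -(K:ℝ)) : ℝ × ℝ) ((K:ℝ), (K:ℝ)) →
      |h x * g x| ^ s = 0 := by
    intro x hx; rw [h0 x hx, zero_mul, abs_zero, Real.zero_rpow hs0.ne']
  have i1 : Integrable fun x => |h x| ^ s :=
    c1.integrable_of_hasCompactSupport (HasCompactSupport.intro isCompact_Icc z1)
  have i2 : Integrable fun x => |h x * g x| ^ s :=
    c2.integrable_of_hasCompactSupport (HasCompactSupport.intro isCompact_Icc z2)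
  have e1 := ih_fold K _ i1 z1
  have e2 := ih_fold K _ i2 z2
  set M := Finset.Ico (-(K:ℤ)) K ×ˢ Finset.Ico (-(K:ℤ)) K with hM
  set Q : Set (ℝ × ℝ) := Set.Icc ((0, 0) : ℝ × ℝ) (1, 1) with hQ
  set S : ℝ × ℝ → ℝ := fun x => ∑ m ∈ M, |h (x.1 + (m.1 : ℝ), x.2 + (m.2 : ℝ))| ^ s with hS
  have cS : Continuous S := by
    refine continuous_finset_sum _ fun m _ => ?_
    exact c1.comp (by fun_prop)
  have hSn : ∀ x, 0 ≤ S x := fun x => Finset.sum_nonneg fun m _ => by positivity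
  have vQ : volume Q = 1 := by
    have : Q = Set.Icc (0:ℝ) 1 ×ˢ Set.Icc (0:ℝ) 1 := by rw [Set.Icc_prod_Icc]
    rw [this, Measure.volume_eq_prod, Measure.prod_prod]
    simp
  obtain ⟨y, hyQ, hy⟩ : ∃ y ∈ Q, S y ≤ ∫ x, |h x| ^ s := by
    have := exists_le_setAverage (μ := volume) (s := Q) (f := S) (by rw [vQ]; simp)
      (by rw [vQ]; simp) (cS.continuousOn.integrableOn_compact isCompact_Icc)
    obtain ⟨y, hy, hle⟩ := this
    refine ⟨y, hy, ?_⟩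
    rw [setAverage_eq, measureReal_def, vQ] at hle
    rw [e1]
    simpa using hle
  have hcard : (M.card : ℝ) = (2 * (K:ℝ)) ^ (2:ℝ) := by
    rw [hM, Finset.card_product, Int.card_Ico]
    have : ((K:ℤ) - -(K:ℤ)).toNat = 2 * K := by omega
    rw [this]
    push_cast
    rw [Real.rpow_two]; ring
  have key : ∀ x ∈ Q, S x ≤ ((∫ x, |h x| ^ s) ^ (1/s) + (2 * (K:ℝ)) ^ (2/s) * D) ^ s := by
    intro x hx
    have mink := Real.Lp_add_le M (fun m => h (y.1 + (m.1 : ℝ), y.2 + (m.2 : ℝ)))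
      (fun m => h (x.1 + (m.1 : ℝ), x.2 + (m.2 : ℝ)) - h (y.1 + (m.1 : ℝ), y.2 + (m.2 : ℝ))) hs
    simp only [add_sub_cancel] at mink
    have b1 : (∑ m ∈ M, |h (y.1 + (m.1 : ℝ), y.2 + (m.2 : ℝ))| ^ s) ^ (1/s) ≤
        (∫ x, |h x| ^ s) ^ (1/s) := Real.rpow_le_rpow (hSn y) hy (by positivity)
    have b2 : (∑ m ∈ M, |h (x.1 + (m.1 : ℝ), x.2 + (m.2 : ℝ)) -
        h (y.1 + (m.1 : ℝ), y.2 + (m.2 : ℝ))| ^ s) ^ (1/s) ≤ (2 * (K:ℝ)) ^ (2/s) * D := by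
      have : ∑ m ∈ M, |h (x.1 + (m.1 : ℝ), x.2 + (m.2 : ℝ)) -
        h (y.1 + (m.1 : ℝ), y.2 + (m.2 : ℝ))| ^ s ≤ (2 * (K:ℝ)) ^ (2:ℝ) * D ^ s := by
        rw [← hcard, ← nsmul_eq_mul]
        refine Finset.sum_le_card_nsmul _ _ _ fun m _ => ?_
        refine Real.rpow_le_rpow (abs_nonneg _) (hD _ _ ?_) hs0.le
        rw [Prod.norm_def]
        simp only [hQ, Set.mem_Icc, Prod.le_def] at hx hyQ
        simp only [Prod.fst_sub, Prod.snd_sub, add_sub_add_right_eq_sub, Real.norm_eq_abs]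
        refine max_le (abs_le.2 ⟨?_, ?_⟩) (abs_le.2 ⟨?_, ?_⟩) <;>
          linarith [hx.1.1, hx.1.2, hx.2.1, hx.2.2, hyQ.1.1, hyQ.1.2, hyQ.2.1, hyQ.2.2]
      refine (Real.rpow_le_rpow (Finset.sum_nonneg fun m _ => by positivity) this
        (by positivity)).trans_eq ?_
      rw [Real.mul_rpow (by positivity) (by positivity), ← Real.rpow_mul (by positivity),
        ← Real.rpow_mul hD0, mul_one_div_cancel hs0.ne', Real.rpow_one, mul_one_div]
    have b3 : S x ^ (1/s) ≤ _ := mink.trans (add_le_add b1 b2)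
    have b4 := Real.rpow_le_rpow (Real.rpow_nonneg (hSn x) _) b3 hs0.le
    rwa [← Real.rpow_mul (hSn x), one_div_mul_cancel hs0.ne', Real.rpow_one] at b4
  rw [e2, ← integral_const_mul]
  refine setIntegral_mono_on ?_ ?_ measurableSet_Icc ?_
  · refine ContinuousOn.integrableOn_compact isCompact_Icc (Continuous.continuousOn ?_)
    refine continuous_finset_sum _ fun m _ => ?_
    exact c2.comp (f := fun x : ℝ × ℝ => (x.1 + (m.1 : ℝ), x.2 + (m.2 : ℝ))) (by fun_prop)
  · exact ((continuous_const.mul cg).continuousOn).integrableOn_compact isCompact_Icc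
  · intro x hx
    have : ∑ m ∈ M, |h (x.1 + (m.1 : ℝ), x.2 + (m.2 : ℝ)) *
        g (x.1 + (m.1 : ℝ), x.2 + (m.2 : ℝ))| ^ s = S x * |g x| ^ s := by
      rw [hS, Finset.sum_mul]
      refine Finset.sum_congr rfl fun m _ => ?_
      rw [hg, abs_mul, Real.mul_rpow (abs_nonneg _) (abs_nonneg _)]
    rw [this]
    exact mul_le_mul_of_nonneg_right (key x hx) (by positivity)

theorem improved_holder (s : ℝ) (hs : 1 ≤ s) :
    ∃ C > 0, ∀ (k lam : ℕ), 1 ≤ lam →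
      ∀ f : ℝ × ℝ → ℝ, ContDiff ℝ (⊤ : ℕ∞) f →
        tsupport f ⊆ Set.Icc ((-(k:ℝ), -(k:ℝ)) : ℝ × ℝ) ((k:ℝ), (k:ℝ)) →
      ∀ g : ℝ × ℝ → ℝ, ContDiff ℝ (⊤ : ℕ∞) g →
        (∀ (m₁ m₂ : ℤ) (x : ℝ × ℝ), g (x.1 + m₁, x.2 + m₂) = g x) →
      (∫ x : ℝ × ℝ, |f x * g ((lam:ℝ) • x)| ^ s) ^ (1/s)
        ≤ (∫ x : ℝ × ℝ, |f x| ^ s) ^ (1/s) *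
            (∫ x in Set.Icc (((0:ℝ), (0:ℝ)) : ℝ × ℝ) ((1:ℝ), (1:ℝ)), |g x| ^ s) ^ (1/s)
          + C * (2 * (k:ℝ)) ^ (2/s) * (lam:ℝ) ^ (-(1/s)) *
              ((⨆ x : ℝ × ℝ, |f x|) + ⨆ x : ℝ × ℝ, ‖fderiv ℝ f x‖) *
              (∫ x in Set.Icc (((0:ℝ), (0:ℝ)) : ℝ × ℝ) ((1:ℝ), (1:ℝ)), |g x| ^ s) ^ (1/s) := by
  refine ⟨1, one_pos, fun k lam hlam f hf hsupp g hg hper => ?_⟩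
  have hs0 : 0 < s := by linarith
  have hl1 : (1:ℝ) ≤ lam := by exact_mod_cast hlam
  have hl0 : (0:ℝ) < lam := by linarith
  have hcs : HasCompactSupport f := HasCompactSupport.of_support_subset_isCompact isCompact_Icc
    ((subset_tsupport f).trans hsupp)
  have hf0 : ∀ x, x ∉ Set.Icc ((-(k:ℝ), -(k:ℝ)) : ℝ × ℝ) ((k:ℝ), (k:ℝ)) → f x = 0 :=
    fun x hx => image_eq_zero_of_notMem_tsupport fun h => hx (hsupp h)
  set L := ⨆ x : ℝ × ℝ, ‖fderiv ℝ f x‖ with hL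
  set N := ⨆ x : ℝ × ℝ, |f x| with hN
  have hN0 : 0 ≤ N := Real.iSup_nonneg fun _ => abs_nonneg _
  have hL0 : 0 ≤ L := Real.iSup_nonneg fun _ => norm_nonneg _
  have hbd : BddAbove (Set.range fun x : ℝ × ℝ => ‖fderiv ℝ f x‖) :=
    ((hf.continuous_fderiv (by simp)).norm).bddAbove_range_of_hasCompactSupport
      (hcs.fderiv ℝ).norm
  have hlip : ∀ x y, |f x - f y| ≤ L * ‖x - y‖ := by
    intro x y
    have := Convex.norm_image_sub_le_of_norm_fderiv_le (𝕜 := ℝ) (f := f) (C := L)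
      (s := Set.univ) (x := y) (y := x)
      (fun z _ => (hf.differentiable (by simp)).differentiableAt)
      (fun z _ => le_ciSup hbd z) convex_univ (Set.mem_univ _) (Set.mem_univ _)
    simpa using this
  set G := ∫ x in Set.Icc (((0:ℝ), (0:ℝ)) : ℝ × ℝ) ((1:ℝ), (1:ℝ)), |g x| ^ s with hG
  have hG0 : 0 ≤ G := integral_nonneg fun x => by positivity
  have hscale : ∀ F : ℝ × ℝ → ℝ, ∫ x, F ((lam:ℝ) • x) = ((lam:ℝ) ^ 2)⁻¹ * ∫ x, F x := by
    intro F
    rw [Measure.integral_comp_smul]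
    simp [abs_of_pos hl0]
  set h : ℝ × ℝ → ℝ := fun x => f ((lam:ℝ)⁻¹ • x) with hh
  have hhl : ∀ x, h ((lam:ℝ) • x) = f x := by
    intro x
    simp only [hh, smul_smul, inv_mul_cancel₀ hl0.ne', one_smul]
  have U := ih_unit s hs (k * lam) h g (hf.continuous.comp (by fun_prop)) hg.continuous
    (L / lam) (by positivity) ?_ ?_ hper
  · have E1 : ∫ x, |f x * g ((lam:ℝ) • x)| ^ s = ((lam:ℝ) ^ 2)⁻¹ * ∫ x, |h x * g x| ^ s := by
      rw [← hscale]; simp only [hhl]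
    have E2 : ∫ x, |f x| ^ s = ((lam:ℝ) ^ 2)⁻¹ * ∫ x, |h x| ^ s := by
      rw [← hscale (fun x => |h x| ^ s)]; simp only [hhl]
    rw [E1, E2]
    set H := ∫ x, |h x| ^ s with hH
    have hH0 : 0 ≤ H := integral_nonneg fun x => by positivity
    set T := (2 * ((k * lam : ℕ):ℝ)) ^ (2/s) * (L / lam) with hT
    have hT0 : 0 ≤ T := by positivity
    have hA : 0 ≤ H ^ (1/s) + T := by positivity
    have V : (((lam:ℝ) ^ 2)⁻¹ * ∫ x, |h x * g x| ^ s) ^ (1/s) ≤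
        (((lam:ℝ) ^ 2)⁻¹) ^ (1/s) * ((H ^ (1/s) + T) * G ^ (1/s)) := by
      have I0 : 0 ≤ ∫ x, |h x * g x| ^ s := integral_nonneg fun x => by positivity
      rw [Real.mul_rpow (by positivity) I0]
      refine mul_le_mul_of_nonneg_left ?_ (by positivity)
      refine (Real.rpow_le_rpow I0 U (by positivity)).trans_eq ?_
      rw [Real.mul_rpow (by positivity) hG0, ← Real.rpow_mul hA, mul_one_div_cancel hs0.ne',
        Real.rpow_one]
    refine V.trans ?_
    rw [Real.mul_rpow (by positivity) hH0]
    have W : (((lam:ℝ) ^ 2)⁻¹) ^ (1/s) * T ≤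
        1 * (2 * (k:ℝ)) ^ (2/s) * (lam:ℝ) ^ (-(1/s)) * (N + L) := by
      have w1 : (((lam:ℝ) ^ 2)⁻¹) ^ (1/s) * (lam:ℝ) ^ (2/s) = 1 := by
        rw [← Real.rpow_two, ← Real.rpow_neg hl0.le, ← Real.rpow_mul hl0.le,
          ← Real.rpow_add hl0]
        have : -2 * (1/s) + 2/s = 0 := by ring
        rw [this, Real.rpow_zero]
      have w2 : T = (2 * (k:ℝ)) ^ (2/s) * (lam:ℝ) ^ (2/s) * (L / lam) := by
        rw [hT, ← Real.mul_rpow (by positivity) hl0.le]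
        push_cast
        rw [mul_assoc 2]
      have w3 : L / lam ≤ (lam:ℝ) ^ (-(1/s)) * (N + L) := by
        have : (lam:ℝ)⁻¹ ≤ (lam:ℝ) ^ (-(1/s)) := by
          rw [← Real.rpow_neg_one]
          refine Real.rpow_le_rpow_of_exponent_le hl1 ?_
          have : 1/s ≤ 1 := by rw [div_le_one hs0]; exact hs
          linarith
        rw [div_eq_inv_mul]
        exact mul_le_mul this (by linarith) hL0 (by positivity)
      calc (((lam:ℝ) ^ 2)⁻¹) ^ (1/s) * T
          = ((((lam:ℝ) ^ 2)⁻¹) ^ (1/s) * (lam:ℝ) ^ (2/s)) * ((2 * (k:ℝ)) ^ (2/s) * (L / lam)) := by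
            rw [w2]; ring
        _ = (2 * (k:ℝ)) ^ (2/s) * (L / lam) := by rw [w1, one_mul]
        _ ≤ (2 * (k:ℝ)) ^ (2/s) * ((lam:ℝ) ^ (-(1/s)) * (N + L)) :=
            mul_le_mul_of_nonneg_left w3 (by positivity)
        _ = _ := by ring
    have W2 := mul_le_mul_of_nonneg_right W (Real.rpow_nonneg hG0 (1/s))
    linarith
  · intro x hx
    refine hf0 _ fun hx' => hx ?_
    simp only [Set.mem_Icc, Prod.le_def, Prod.smul_fst, Prod.smul_snd, smul_eq_mul,
      inv_mul_eq_div, le_div_iff₀ hl0, div_le_iff₀ hl0] at hx' ⊢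
    push_cast
    simpa only [neg_mul] using hx'
  · intro x y hxy
    refine (hlip _ _).trans ?_
    rw [← smul_sub, norm_smul, norm_inv, Real.norm_of_nonneg hl0.le, div_eq_mul_inv]
    have : (lam:ℝ)⁻¹ * ‖x - y‖ ≤ (lam:ℝ)⁻¹ := mul_le_of_le_one_right (by positivity) hxy
    exact mul_le_mul_of_nonneg_left this hL0
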